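/- arXiv:hep-th/0204230 — 3 statements merged into one kernel-verified Lean document; each statement's English description precedes it below -/
import Mathlib

section
/- Let H be a complex Hilbert space, R a von Neumann algebra acting on H, and Ω ∈ H a vector that is cyclic for the commutant R′. Let (U_k)_{k∈ℕ} be a sequence of pairwise commuting unitary operators belonging to R such that ∑_k ‖U_kΩ − Ω‖ < ∞. Then for every ξ ∈ H the sequence of vectors (U_1 U_2 ⋯ U_n ξ)_n converges in H, and the operator U defined by Uξ = lim_n U_1⋯U_n ξ is unitary (i.e., the partial products converge in the strong operator topology to a unitary operator). -/
/-!
Write `Pₙ = U₀ ⋯ Uₙ₋₁`. Since `Pₙ` is isometric, `‖Pₙ₊₁ ξ - Pₙ ξ‖ = ‖Uₙ ξ - ξ‖`, so `Pₙ ξ` is Cauchy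
whenever `∑ ‖Uₖ ξ - ξ‖ < ∞`. The vectors `ξ` with this property form a subspace, which contains
`T Ω` for every `T ∈ R'` because `Uₖ T Ω - T Ω = T (Uₖ Ω - Ω)`; it is therefore dense, and as the
`Pₙ` are isometric, `Pₙ ξ` converges for every `ξ` (`exists_strong_limit`).

The strong limit `V` is automatically isometric; surjectivity comes from the adjoints. Since
`‖Uₖ* ξ - ξ‖ = ‖Uₖ ξ - ξ‖`, the same argument applies to the sequence `Uₖ*`, whose partial products
are `Pₙ*` by commutativity. Hence `Pₙ*` also converges strongly, necessarily to `V*`, and passing to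
the limit in `Pₙ* Pₙ = Pₙ Pₙ* = 1` shows that `V` is unitary.
-/

open Filter Topology

section

variable {H : Type*} [NormedAddCommGroup H] [InnerProductSpace ℂ H] [CompleteSpace H]

lemma norm_apply_of_mem_unitary {u : H →L[ℂ] H} (hu : u ∈ unitary (H →L[ℂ] H)) (x : H) :
    ‖u x‖ = ‖x‖ :=
  ContinuousLinearMap.norm_map_of_mem_unitary hu x

lemma norm_star_apply_sub {u : H →L[ℂ] H} (hu : u ∈ unitary (H →L[ℂ] H)) (x : H) :
    ‖(star u) x - x‖ = ‖u x - x‖ := by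
  have h : u ((star u) x - x) = -(u x - x) := by
    have h1 : u ((star u) x) = x := congrArg (fun T : H →L[ℂ] H => T x) hu.2
    rw [map_sub, h1, neg_sub]
  rw [← norm_apply_of_mem_unitary hu, h, norm_neg]

lemma listProd_mem_unitary {U : ℕ → H →L[ℂ] H} (hU : ∀ k, U k ∈ unitary (H →L[ℂ] H)) (n : ℕ) :
    ((List.range n).map U).prod ∈ unitary (H →L[ℂ] H) := by
  refine list_prod_mem fun x hx => ?_
  obtain ⟨k, -, rfl⟩ := List.mem_map.1 hx
  exact hU k

/-- Strong convergence of the partial products, given a dense set of vectors `ξ` with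
`∑ ‖Uₖ ξ - ξ‖ < ∞`. No commutativity is needed here. -/
lemma exists_strong_limit {U : ℕ → H →L[ℂ] H} (hU : ∀ k, U k ∈ unitary (H →L[ℂ] H))
    (hd : Dense {ξ : H | Summable fun k => ‖U k ξ - ξ‖}) :
    ∃ V : H →L[ℂ] H,
      ∀ ξ : H, Tendsto (fun n => ((List.range n).map U).prod ξ) atTop (𝓝 (V ξ)) := by
  set P : ℕ → H →L[ℂ] H := fun n => ((List.range n).map U).prod with hP
  have hPn : ∀ n x, ‖P n x‖ = ‖x‖ := fun n x =>
    norm_apply_of_mem_unitary (listProd_mem_unitary hU n) x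
  have hcd : ∀ ξ : H, (Summable fun k => ‖U k ξ - ξ‖) → CauchySeq fun n => P n ξ := by
    intro ξ hξ
    refine cauchySeq_of_summable_dist (hξ.congr fun n => ?_)
    have h : P (n + 1) ξ = P n (U n ξ) := by
      simp only [hP, List.prod_range_succ]
      rfl
    rw [dist_comm, dist_eq_norm, h, ← map_sub, hPn]
  have hc : ∀ ξ : H, CauchySeq fun n => P n ξ := by
    intro ξ
    refine Metric.cauchySeq_iff'.2 fun ε hε => ?_
    obtain ⟨η, hη, hη'⟩ := Metric.dense_iff.1 hd ξ (ε / 3) (by positivity)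
    obtain ⟨N, hN⟩ := Metric.cauchySeq_iff'.1 (hcd η hη') (ε / 3) (by positivity)
    refine ⟨N, fun n hn => ?_⟩
    have h1 : ∀ m, dist (P m ξ) (P m η) < ε / 3 := fun m => by
      rw [dist_eq_norm, ← map_sub, hPn, ← dist_eq_norm, dist_comm]
      exact hη
    have h2 := hN n hn
    have h3 := h1 N
    rw [dist_comm] at h3
    linarith [h1 n, dist_triangle4 (P n ξ) (P n η) (P N η) (P N ξ)]
  choose f hf using fun ξ => cauchySeq_tendsto_of_complete (hc ξ)
  exact ⟨continuousLinearMapOfTendsto P (tendsto_pi_nhds.2 hf), hf⟩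

/-- If `Pₙ → V` and `Qₙ → W` strongly, `Pₙ Qₙ = 1` and the `Pₙ` are unitary, then `V W = 1`. -/
lemma mul_eq_one_of_strong_limits {P Q : ℕ → H →L[ℂ] H} {V W : H →L[ℂ] H}
    (hP : ∀ n, P n ∈ unitary (H →L[ℂ] H)) (hPQ : ∀ n, P n * Q n = 1)
    (hV : ∀ ξ, Tendsto (fun n => P n ξ) atTop (𝓝 (V ξ)))
    (hW : ∀ ξ, Tendsto (fun n => Q n ξ) atTop (𝓝 (W ξ))) : V * W = 1 := by
  ext ξ
  -- `‖Pₙ W ξ - ξ‖ = ‖Pₙ (W ξ - Qₙ ξ)‖ = ‖W ξ - Qₙ ξ‖ → 0`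
  refine tendsto_nhds_unique (hV (W ξ)) ?_
  rw [tendsto_iff_norm_sub_tendsto_zero]
  refine (tendsto_iff_norm_sub_tendsto_zero.1 (hW ξ)).congr fun n => ?_
  have h : P n (Q n ξ) = ξ := congrArg (fun T : H →L[ℂ] H => T ξ) (hPQ n)
  rw [← norm_apply_of_mem_unitary (hP n), map_sub, h, norm_sub_rev]
  rfl

lemma star_listProd {U : ℕ → H →L[ℂ] H} (hc : ∀ j k, U j * U k = U k * U j) (n : ℕ) :
    star ((List.range n).map U).prod = ((List.range n).map fun k => star (U k)).prod := by
  induction n with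
  | zero => simp
  | succ n ih =>
    have h : Commute ((List.range n).map U).prod (U n) := by
      refine Commute.list_prod_left _ _ fun x hx => ?_
      obtain ⟨k, -, rfl⟩ := List.mem_map.1 hx
      exact hc k n
    rw [List.prod_range_succ, List.prod_range_succ, h.eq, star_mul, ih]

end

/-- Let `H` be a complex Hilbert space, `R` a von Neumann algebra acting
on `H`, and `Ω ∈ H` a vector cyclic for the commutant `R′`.  Let `(U k)` be a sequence of
pairwise commuting unitary operators belonging to `R` with `∑ k, ‖U k Ω − Ω‖ < ∞`.  Then
the partial products `U 0 ⋯ U (n-1)` converge in the strong operator topology to a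
unitary operator. -/
theorem infinite_product_of_unitaries_converges
    {H : Type*} [NormedAddCommGroup H] [InnerProductSpace ℂ H] [CompleteSpace H]
    (R : VonNeumannAlgebra H) (Ω : H)
    (hcyclic : Dense
      (↑(Submodule.span ℂ ((fun T : H →L[ℂ] H => T Ω) '' (R.commutant : Set (H →L[ℂ] H)))) :
        Set H))
    (U : ℕ → H →L[ℂ] H)
    (hUR : ∀ k, U k ∈ R)
    (hUunit : ∀ k, U k ∈ unitary (H →L[ℂ] H))
    (hUcomm : ∀ j k, U j * U k = U k * U j)
    (hsum : Summable fun k => ‖U k Ω - Ω‖) :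
    ∃ V : H →L[ℂ] H, V ∈ unitary (H →L[ℂ] H) ∧
      ∀ ξ : H, Tendsto (fun n => ((List.range n).map U).prod ξ) atTop (𝓝 (V ξ)) := by
  have hd : Dense {ξ : H | Summable fun k => ‖U k ξ - ξ‖} := by
    let S : Submodule ℂ H :=
      { carrier := {ξ : H | Summable fun k => ‖U k ξ - ξ‖}
        zero_mem' := by simp [summable_zero]
        add_mem' := by
          intro a b ha hb
          refine Summable.of_nonneg_of_le (fun _ => norm_nonneg _) (fun k => ?_) (ha.add hb)
          rw [map_add, add_sub_add_comm]
          exact norm_add_le _ _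
        smul_mem' := by
          intro c a ha
          refine (ha.mul_left ‖c‖).congr fun k => ?_
          rw [map_smul, ← smul_sub, norm_smul] }
    refine hcyclic.mono (SetLike.coe_subset_coe.2 (Submodule.span_le (p := S).2 ?_))
    rintro _ ⟨T, hT, rfl⟩
    refine Summable.of_nonneg_of_le (fun _ => norm_nonneg _) (fun k => ?_) (hsum.mul_left ‖T‖)
    have h : U k (T Ω) = T (U k Ω) := congrArg (fun A : H →L[ℂ] H => A Ω)
      (VonNeumannAlgebra.mem_commutant_iff.1 hT (U k) (hUR k))
    change ‖U k (T Ω) - T Ω‖ ≤ _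
    rw [h, ← map_sub]
    exact T.le_opNorm _
  obtain ⟨V, hV⟩ := exists_strong_limit hUunit hd
  obtain ⟨W, hW⟩ := exists_strong_limit (U := fun k => star (U k))
    (fun k => Unitary.star_mem (hUunit k)) (by simpa only [norm_star_apply_sub (hUunit _)] using hd)
  simp only [← star_listProd hUcomm] at hW
  have hPu := listProd_mem_unitary hUunit
  have hWV : W = star V := by
    rw [ContinuousLinearMap.star_eq_adjoint, ContinuousLinearMap.eq_adjoint_iff]
    intro x y
    refine tendsto_nhds_unique ((hW x).inner tendsto_const_nhds)
      ((tendsto_const_nhds.inner (hV y)).congr fun n => ?_)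
    rw [ContinuousLinearMap.star_eq_adjoint, ContinuousLinearMap.adjoint_inner_left]
  subst hWV
  refine ⟨V, ⟨?_, ?_⟩, hV⟩
  · exact mul_eq_one_of_strong_limits (fun n => Unitary.star_mem (hPu n)) (fun n => (hPu n).1) hW hV
  · exact mul_eq_one_of_strong_limits hPu (fun n => (hPu n).2) hV hW
end

section
/- Let H be a complex Hilbert space, R a von Neumann algebra acting on H, and Ω ∈ H a vector that is cyclic for the commutant R′. For each n ∈ ℕ let U_n : ℝ → B(H) be a one-parameter group of unitaries (U_n(0) = 1 and U_n(λ+μ) = U_n(λ)U_n(μ) for all λ, μ ∈ ℝ) with values in R, such that U_n(λ) and U_m(μ) commute for all n ≠ m and all λ, μ ∈ ℝ. Assume there are nonnegative constants c_n with ∑_n c_n < ∞ such that ‖U_n(λ)Ω − Ω‖ ≤ c_n |λ| for every λ ∈ ℝ and every n. Then for every λ ∈ ℝ the strong limit U(λ) := s-lim_{n→∞} U_1(λ)U_2(λ)⋯U_n(λ) exists and is unitary, the map λ ↦ U(λ) is a one-parameter group of unitaries, and for every ξ ∈ H the map λ ↦ U(λ)ξ is continuous. -/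
open Filter Topology

/-!
Call `ξ` *good* if `‖U n l ξ - ξ‖ ≤ C * (c n * |l|)` for a constant `C` independent of `n`
and `l`.  Since `T ∈ R′` commutes with every `U n l`, the vector `T Ω` is good with `C = ‖T‖`,
and good vectors are stable under linear combinations; so cyclicity makes them dense.

The partial products `P n l` are isometries with `P (n + 1) l = P n l * U n l`, so on a good
vector consecutive partial products differ by at most `C * (c n * |l|)`, which is summable: they
converge.  A sequence of isometries that converges on a dense set converges everywhere, and the
limit `V l` is an isometry.  Commutation gives `P n (l + m) = P n l * P n m`, which passes to the
limit, so `V` is a one-parameter group of isometries and hence of unitaries.  Summing the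
estimates shows `‖V l ξ - ξ‖ ≤ C * (∑ c) * |l|` for good `ξ`, so `l ↦ V l ξ` is Lipschitz for good
`ξ`; density and equicontinuity give continuity for every `ξ`.
-/

namespace InfiniteProduct

variable {H : Type*} [NormedAddCommGroup H] [InnerProductSpace ℂ H]

/-- The partial product `U 0 l * ⋯ * U (n - 1) l`. -/
noncomputable def partialProd (U : ℕ → ℝ → H →L[ℂ] H) (n : ℕ) (l : ℝ) : H →L[ℂ] H :=
  ((List.range n).map (fun k => U k l)).prod

lemma partialProd_zero (U : ℕ → ℝ → H →L[ℂ] H) (l : ℝ) : partialProd U 0 l = 1 := by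
  simp [partialProd]

lemma partialProd_succ (U : ℕ → ℝ → H →L[ℂ] H) (n : ℕ) (l : ℝ) :
    partialProd U (n + 1) l = partialProd U n l * U n l := by
  simp [partialProd, List.range_succ]

lemma partialProd_at_zero {U : ℕ → ℝ → H →L[ℂ] H} (hU : ∀ n, U n 0 = 1) (n : ℕ) :
    partialProd U n 0 = 1 := by
  induction n with
  | zero => exact partialProd_zero U 0
  | succ n ih => rw [partialProd_succ, ih, hU, one_mul]

lemma partialProd_commute {U : ℕ → ℝ → H →L[ℂ] H}
    (hU : ∀ n m, n ≠ m → ∀ (l m' : ℝ), U n l * U m m' = U m m' * U n l)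
    {n k : ℕ} (hnk : n ≤ k) (l m : ℝ) : Commute (partialProd U n l) (U k m) := by
  induction n with
  | zero => rw [partialProd_zero]; exact Commute.one_left _
  | succ n ih =>
    rw [partialProd_succ]
    exact (ih (by omega)).mul_left (hU n k (by omega) l m)

lemma partialProd_add {U : ℕ → ℝ → H →L[ℂ] H}
    (hUgroup : ∀ n (l m : ℝ), U n (l + m) = U n l * U n m)
    (hU : ∀ n m, n ≠ m → ∀ (l m' : ℝ), U n l * U m m' = U m m' * U n l)
    (n : ℕ) (l m : ℝ) : partialProd U n (l + m) = partialProd U n l * partialProd U n m := by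
  induction n with
  | zero => simp [partialProd_zero]
  | succ n ih =>
    rw [partialProd_succ, partialProd_succ, partialProd_succ, ih, hUgroup]
    have h := (partialProd_commute hU le_rfl m l : Commute (partialProd U n m) (U n l)).eq
    calc partialProd U n l * partialProd U n m * (U n l * U n m)
        = partialProd U n l * (partialProd U n m * U n l) * U n m := by simp only [mul_assoc]
      _ = partialProd U n l * U n l * (partialProd U n m * U n m) := by
        rw [h]; simp only [mul_assoc]

/-- A vector moved by each `U n l` by at most a fixed multiple of `c n * |l|`. -/
def Good (U : ℕ → ℝ → H →L[ℂ] H) (c : ℕ → ℝ) (ξ : H) : Prop :=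
  ∃ C : ℝ, ∀ n (l : ℝ), ‖U n l ξ - ξ‖ ≤ C * (c n * |l|)

variable [CompleteSpace H]

lemma norm_map_of_mem_unitary {A : H →L[ℂ] H} (hA : A ∈ unitary (H →L[ℂ] H)) (ξ : H) :
    ‖A ξ‖ = ‖ξ‖ :=
  (ContinuousLinearMap.norm_map_iff_adjoint_comp_self A).2 (Unitary.star_mul_self_of_mem hA) ξ

lemma norm_partialProd {U : ℕ → ℝ → H →L[ℂ] H}
    (hU : ∀ n l, U n l ∈ unitary (H →L[ℂ] H)) (n : ℕ) (l : ℝ) (ξ : H) :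
    ‖partialProd U n l ξ‖ = ‖ξ‖ := by
  induction n generalizing ξ with
  | zero => simp [partialProd_zero]
  | succ n ih =>
    rw [partialProd_succ, mul_apply_eq_comp, ih, norm_map_of_mem_unitary (hU n l)]

lemma Good.of_mem_span {R : VonNeumannAlgebra H} {Ω : H} {U : ℕ → ℝ → H →L[ℂ] H}
    (hUR : ∀ n (l : ℝ), U n l ∈ R) {c : ℕ → ℝ}
    (hbound : ∀ n (l : ℝ), ‖U n l Ω - Ω‖ ≤ c n * |l|) {ξ : H}
    (hξ : ξ ∈ Submodule.span ℂ
      ((fun T : H →L[ℂ] H => T Ω) '' (R.commutant : Set (H →L[ℂ] H)))) : Good U c ξ := by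
  induction hξ using Submodule.span_induction with
  | mem x hx =>
    obtain ⟨T, hT, rfl⟩ := hx
    refine ⟨‖T‖, fun n l => ?_⟩
    have hcomm : U n l * T = T * U n l :=
      VonNeumannAlgebra.mem_commutant_iff.1 hT (U n l) (hUR n l)
    have h : U n l (T Ω) - T Ω = T (U n l Ω - Ω) := by
      rw [map_sub, ← mul_apply_eq_comp, hcomm, mul_apply_eq_comp]
    change ‖U n l (T Ω) - T Ω‖ ≤ _
    rw [h]
    exact (T.le_opNorm _).trans (mul_le_mul_of_nonneg_left (hbound n l) (norm_nonneg _))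
  | zero => exact ⟨0, fun n l => by simp⟩
  | add x y _ _ hx hy =>
    obtain ⟨C, hC⟩ := hx
    obtain ⟨D, hD⟩ := hy
    refine ⟨C + D, fun n l => ?_⟩
    calc ‖U n l (x + y) - (x + y)‖ = ‖(U n l x - x) + (U n l y - y)‖ := by
          rw [map_add]; congr 1; abel
      _ ≤ ‖U n l x - x‖ + ‖U n l y - y‖ := norm_add_le _ _
      _ ≤ (C + D) * (c n * |l|) := by rw [add_mul]; exact add_le_add (hC n l) (hD n l)
  | smul a x _ hx =>
    obtain ⟨C, hC⟩ := hx
    refine ⟨‖a‖ * C, fun n l => ?_⟩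
    rw [map_smul, ← smul_sub, norm_smul, mul_assoc]
    exact mul_le_mul_of_nonneg_left (hC n l) (norm_nonneg _)

lemma dist_partialProd_succ_le {U : ℕ → ℝ → H →L[ℂ] H}
    (hU : ∀ n l, U n l ∈ unitary (H →L[ℂ] H)) {c : ℕ → ℝ} {ξ : H} {C : ℝ}
    (hC : ∀ n (l : ℝ), ‖U n l ξ - ξ‖ ≤ C * (c n * |l|)) (n : ℕ) (l : ℝ) :
    dist (partialProd U n l ξ) (partialProd U (n + 1) l ξ) ≤ C * (c n * |l|) := by
  rw [dist_comm, dist_eq_norm, partialProd_succ, mul_apply_eq_comp, ← map_sub,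
    norm_partialProd hU]
  exact hC n l

lemma cauchySeq_partialProd {U : ℕ → ℝ → H →L[ℂ] H}
    (hU : ∀ n l, U n l ∈ unitary (H →L[ℂ] H)) {c : ℕ → ℝ} (hcsum : Summable c)
    (hdense : Dense {ξ | Good U c ξ}) (l : ℝ) (ξ : H) :
    CauchySeq fun n => partialProd U n l ξ := by
  refine Metric.cauchySeq_iff'.2 fun ε hε => ?_
  obtain ⟨η, ⟨C, hC⟩, hη⟩ := hdense.exists_dist_lt ξ (show 0 < ε / 3 by positivity)
  have hcau : CauchySeq fun n => partialProd U n l η :=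
    cauchySeq_of_dist_le_of_summable _ (fun n => dist_partialProd_succ_le hU hC n l)
      ((hcsum.mul_right _).mul_left _)
  obtain ⟨N, hN⟩ := Metric.cauchySeq_iff'.1 hcau (ε / 3) (by positivity)
  have hiso : ∀ n, dist (partialProd U n l ξ) (partialProd U n l η) = dist ξ η := fun n => by
    rw [dist_eq_norm, ← map_sub, norm_partialProd hU, dist_eq_norm]
  refine ⟨N, fun n hn => ?_⟩
  have h₁ := hiso n
  have h₂ := hiso N
  have h₃ := hN n hn
  have h₄ := dist_triangle4_right (partialProd U n l ξ) (partialProd U N l ξ)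
    (partialProd U n l η) (partialProd U N l η)
  linarith

end InfiniteProduct

open InfiniteProduct in
/-- **Lemma 3.1 of the paper, group form.**  Let `H` be a complex Hilbert
space, `R` a von Neumann algebra on `H`, `Ω` cyclic for the commutant `R′`.  For each `n`
let `U n : ℝ → B(H)` be a one-parameter unitary group with values in `R`, with
`U n λ` and `U m μ` commuting for `n ≠ m`, and assume `‖U n λ Ω − Ω‖ ≤ c n * |λ|` with
`∑ c n < ∞`.  Then the strong limits `V λ` of the partial products exist, are unitary,
form a one-parameter group, and `λ ↦ V λ ξ` is continuous for every `ξ`. -/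
theorem infinite_product_of_one_parameter_groups
    {H : Type*} [NormedAddCommGroup H] [InnerProductSpace ℂ H] [CompleteSpace H]
    (R : VonNeumannAlgebra H) (Ω : H)
    (hcyclic : Dense
      (↑(Submodule.span ℂ ((fun T : H →L[ℂ] H => T Ω) '' (R.commutant : Set (H →L[ℂ] H)))) :
        Set H))
    (U : ℕ → ℝ → H →L[ℂ] H)
    (hUR : ∀ n (fun_lambda : ℝ), U n fun_lambda ∈ R)
    (hUunit : ∀ n (l : ℝ), U n l ∈ unitary (H →L[ℂ] H))
    (hUzero : ∀ n, U n 0 = 1)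
    (hUgroup : ∀ n (l m : ℝ), U n (l + m) = U n l * U n m)
    (hUcomm : ∀ n m, n ≠ m → ∀ (l m' : ℝ), U n l * U m m' = U m m' * U n l)
    (c : ℕ → ℝ) (hc : ∀ n, 0 ≤ c n) (hcsum : Summable c)
    (hbound : ∀ n (l : ℝ), ‖U n l Ω - Ω‖ ≤ c n * |l|) :
    ∃ V : ℝ → H →L[ℂ] H,
      (∀ l : ℝ, V l ∈ unitary (H →L[ℂ] H)) ∧
      (∀ (l : ℝ) (ξ : H),
        Tendsto (fun n => ((List.range n).map (fun k => U k l)).prod ξ) atTop (𝓝 (V l ξ))) ∧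
      V 0 = 1 ∧
      (∀ l m : ℝ, V (l + m) = V l * V m) ∧
      (∀ ξ : H, Continuous fun l : ℝ => V l ξ) := by
  have hdense : Dense {ξ | Good U c ξ} :=
    hcyclic.mono fun ξ hξ => Good.of_mem_span hUR hbound hξ
  have hlim : ∀ (l : ℝ) (ξ : H), ∃ η, Tendsto (fun n => partialProd U n l ξ) atTop (𝓝 η) :=
    fun l ξ => cauchySeq_tendsto_of_complete (cauchySeq_partialProd hUunit hcsum hdense l ξ)
  choose W hW using hlim
  have hWnorm : ∀ l ξ, ‖W l ξ‖ = ‖ξ‖ := fun l ξ =>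
    tendsto_nhds_unique (hW l ξ).norm (by simp only [norm_partialProd hUunit, tendsto_const_nhds])
  let V : ℝ → H →L[ℂ] H := fun l =>
    LinearIsometry.toContinuousLinearMap
      { toFun := W l
        map_add' := fun x y => tendsto_nhds_unique (hW l (x + y)) (by
          simpa only [map_add] using (hW l x).add (hW l y))
        map_smul' := fun a x => tendsto_nhds_unique (hW l (a • x)) (by
          simpa only [map_smul, RingHom.id_apply] using (hW l x).const_smul a)
        norm_map' := hWnorm l }
  have hV : ∀ l ξ, Tendsto (fun n => partialProd U n l ξ) atTop (𝓝 (V l ξ)) := hW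
  have hVnorm : ∀ l ξ, ‖V l ξ‖ = ‖ξ‖ := hWnorm
  have hVzero : V 0 = 1 := by
    ext ξ
    refine tendsto_nhds_unique (hV 0 ξ) ?_
    simp only [partialProd_at_zero hUzero]
    exact tendsto_const_nhds
  have hVadd : ∀ l m, V (l + m) = V l * V m := by
    intro l m
    ext ξ
    refine tendsto_nhds_unique (hV (l + m) ξ) ?_
    -- Replace the inner `P n m ξ` by its limit; the error is unaffected by the isometry `P n l`.
    have h₀ : Tendsto (fun n => partialProd U n l (partialProd U n m ξ - V m ξ)) atTop (𝓝 0) := by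
      rw [tendsto_zero_iff_norm_tendsto_zero]
      simp only [norm_partialProd hUunit]
      exact tendsto_iff_norm_sub_tendsto_zero.1 (hV m ξ)
    have h₁ := h₀.add (hV l (V m ξ))
    simpa only [partialProd_add hUgroup hUcomm, mul_apply_eq_comp, map_sub,
      sub_add_cancel, zero_add] using h₁
  have hVdist : ∀ l m ξ, dist (V l ξ) (V m ξ) = ‖V (l - m) ξ - ξ‖ := by
    intro l m ξ
    have h : V l = V m * V (l - m) := by rw [← hVadd, add_sub_cancel]
    rw [h, mul_apply_eq_comp, dist_eq_norm, ← map_sub, hVnorm]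
  refine ⟨V, fun l => ?_, hV, hVzero, hVadd, fun ξ => ?_⟩
  · have h₁ : star (V l) * V l = 1 :=
      (ContinuousLinearMap.norm_map_iff_adjoint_comp_self (V l)).1 (hVnorm l)
    have h₂ : V l * V (-l) = 1 := by rw [← hVadd, add_neg_cancel, hVzero]
    exact Unitary.mem_iff.2 ⟨h₁, by rw [left_inv_eq_right_inv h₁ h₂, h₂]⟩
  · -- A uniform limit of the orbit maps of good vectors, which are Lipschitz.
    refine continuous_of_uniform_approx_of_continuous fun u hu => ?_
    obtain ⟨ε, hε, hεu⟩ := Metric.mem_uniformity_dist.1 hu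
    obtain ⟨η, ⟨C, hC⟩, hη⟩ := hdense.exists_dist_lt ξ hε
    refine ⟨fun l => V l η, ?_, fun l => hεu ?_⟩
    · have hmove : ∀ l, ‖V l η - η‖ ≤ C * (∑' n, c n) * |l| := by
        intro l
        have h := dist_le_tsum_of_dist_le_of_tendsto₀ _
          (fun n => dist_partialProd_succ_le hUunit hC n l)
          ((hcsum.mul_right _).mul_left _) (hV l η)
        rw [partialProd_zero, one_apply_eq_self, dist_comm, dist_eq_norm,
          tsum_mul_left, tsum_mul_right, ← mul_assoc] at h
        exact h
      refine (LipschitzWith.of_dist_le' (K := C * ∑' n, c n) fun l m => ?_).continuous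
      rw [hVdist, Real.dist_eq]
      exact hmove _
    · rw [dist_eq_norm, ← map_sub, hVnorm, ← dist_eq_norm]
      exact hη
end

section
/- Let m > 0 and let Ω_m⁺ be the Lorentz-invariant measure on the positive-energy mass-m hyperboloid in ℝ⁴ (the pushforward of (2ω_m(p))⁻¹ d³p under p ↦ (ω_m(p), p)). Let f, g : ℝ⁴ → ℝ be smooth compactly supported functions whose supports are spacelike separated, i.e., q(x − y) < 0 for all x in the support of f and all y in the support of g, where q(x) = x₀² − x₁² − x₂² − x₃². Then the integral ∫ conj(f̂(p)) ĝ(p) dΩ_m⁺(p) is a real number (its imaginary part vanishes), where f̂(p) = ∫_{ℝ⁴} f(x) e^{i(p₀x₀ − p₁x₁ − p₂x₂ − p₃x₃)} dx. -/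
/-!
The integral is regularized with the Gaussian `exp (-ε |p|²)`. By Fubini its imaginary part is then
`∫∫ f(x) g(y) Im W_ε(y - x) dx dy`, where for `(t, z) ∈ ℝ × ℝ³`
`W_ε(t, z) = ∫ exp (-ε |p|²) (2 ω)⁻¹ exp (i (ω t - p·z)) d³p` (`regWave` is the integrand).
The reflection `p ↦ -p` turns `2 Im W_ε` into
`∫ exp (-ε |p|²) exp (-i p·z) (sin (ω t) / ω) d³p`.

Now `sin (ω t) / ω` is an entire function `sincSqrt t` of `ω² = |p|² + m²`, so this integrand
extends holomorphically to `ℂ³`, and the integral is unchanged under a complex translation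
`p ↦ p + s e` along a unit vector `e` (`integral_shiftedKernel_eq`): it is an entire function of
`s`, constant for real `s` by translation invariance. Since `|Im √((q + iτe)² + m²)| ≤ |τ|`
(`abs_im_le_of_sq_eq`), the shift `s = -iλ` along `e = z / |z|` gives
`|Im W_ε(t, z)| ≤ (π/ε)^{3/2} |t| exp (ε λ² - λ (|z| - |t|))` (`abs_im_integral_regWave_le`).

On the compact set `supp f × supp g` the number `|z| - |t|`, for `(t, z) = y - x`, is bounded below
by some `δ > 0`. With `ε = 1/n²` and `λ = n` the regularized imaginary part is `O(n³ exp (-δ n))`,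
while by dominated convergence it tends to the imaginary part in question.
-/

open MeasureTheory

/-- The energy `ω_m(p) = √(|p|² + m²)`. -/
noncomputable def energyOf (m : ℝ) (p : Fin 3 → ℝ) : ℝ :=
  Real.sqrt ((∑ j : Fin 3, p j ^ 2) + m ^ 2)

/-- The Lorentz-invariant measure `Ω_m⁺` on the positive-energy mass-`m` hyperboloid in
`ℝ⁴`: the pushforward under `p ↦ (ω_m(p), p)` of the measure `(2ω_m(p))⁻¹ d³p` on `ℝ³`. -/
noncomputable def massShellMeasure (m : ℝ) : Measure (Fin 4 → ℝ) :=
  Measure.map (fun p : Fin 3 → ℝ => Fin.cons (energyOf m p) p)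
    (volume.withDensity fun p : Fin 3 → ℝ => ENNReal.ofReal ((2 * energyOf m p)⁻¹))

/-- The Minkowski quadratic form `q(x) = x₀² − x₁² − x₂² − x₃²`. -/
def minkowskiQ (x : Fin 4 → ℝ) : ℝ :=
  x 0 ^ 2 - x 1 ^ 2 - x 2 ^ 2 - x 3 ^ 2

/-- The Minkowski bilinear pairing `p·x = p₀x₀ − p₁x₁ − p₂x₂ − p₃x₃`. -/
def minkowskiPairing (p x : Fin 4 → ℝ) : ℝ :=
  p 0 * x 0 - p 1 * x 1 - p 2 * x 2 - p 3 * x 3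

/-- The (relativistic) Fourier transform `f̂(p) = ∫ f(x) e^{i p·x} dx` with respect to the
Minkowski pairing. -/
noncomputable def minkFourier (f : (Fin 4 → ℝ) → ℝ) (p : Fin 4 → ℝ) : ℂ :=
  ∫ x : Fin 4 → ℝ, (f x : ℂ) * Complex.exp (Complex.I * (minkowskiPairing p x : ℂ))

/-! ### The entire function `sin (t √w) / √w` -/

/-- The entire function `w ↦ sin (t √w) / √w`, given by its power series in `w`. -/
noncomputable def sincSqrt (t : ℝ) (w : ℂ) : ℂ :=
  ∑' k : ℕ, (-w) ^ k * (t : ℂ) ^ (2 * k + 1) / ((2 * k + 1).factorial : ℂ)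

lemma differentiable_sincSqrt (t : ℝ) : Differentiable ℂ (sincSqrt t) := by
  intro w
  have hu : Summable fun k : ℕ => |t| * ((‖w‖ + 1) * t ^ 2) ^ k / (k.factorial : ℝ) := by
    simpa only [mul_div_assoc] using
      (Real.summable_pow_div_factorial ((‖w‖ + 1) * t ^ 2)).mul_left |t|
  have h := Complex.differentiableOn_tsum_of_summable_norm
    (F := fun (k : ℕ) (w : ℂ) => (-w) ^ k * (t : ℂ) ^ (2 * k + 1) / ((2 * k + 1).factorial : ℂ))
    (U := Metric.ball 0 (‖w‖ + 1)) hu (fun k => by fun_prop) Metric.isOpen_ball ?_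
  · exact (h w (by simp)).differentiableAt (Metric.isOpen_ball.mem_nhds (by simp))
  · intro k v hv
    rw [mem_ball_zero_iff] at hv
    have h1 : ‖(-v) ^ k * (t : ℂ) ^ (2 * k + 1) / ((2 * k + 1).factorial : ℂ)‖
        = |t| * (‖v‖ * t ^ 2) ^ k / ((2 * k + 1).factorial : ℝ) := by
      have h2 : |t| ^ (2 * k + 1) = (t ^ 2) ^ k * |t| := by rw [pow_succ, pow_mul, sq_abs]
      simp only [norm_div, norm_mul, norm_pow, norm_neg, Complex.norm_real, Real.norm_eq_abs,
        Complex.norm_natCast, h2]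
      ring
    rw [h1]
    have h2 : (k.factorial : ℝ) ≤ ((2 * k + 1).factorial : ℝ) := by
      exact_mod_cast Nat.factorial_le (by omega)
    have h3 : (0 : ℝ) < k.factorial := by positivity
    gcongr

lemma mul_sincSqrt_sq (t : ℝ) (a : ℂ) : a * sincSqrt t (a ^ 2) = Complex.sin (t * a) := by
  rw [← (Complex.hasSum_sin (t * a)).tsum_eq, sincSqrt, ← tsum_mul_left]
  refine tsum_congr fun k => ?_
  have : (-a ^ 2) ^ k = (-1) ^ k * a ^ (2 * k) := by rw [neg_pow, pow_mul]
  rw [this, mul_pow]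
  ring

/-- `sin (t a) / a` is the integral of `cos (τ a)` over `τ ∈ [0, t]`, and
`|cos (τ a)| ≤ exp |τ Im a|`. -/
lemma norm_sincSqrt_sq_le (t : ℝ) (a : ℂ) :
    ‖sincSqrt t (a ^ 2)‖ ≤ |t| * Real.exp (|t| * |a.im|) := by
  rcases eq_or_ne a 0 with rfl | ha
  · have : sincSqrt t (0 ^ 2) = t := by
      rw [sincSqrt, tsum_eq_single 0]
      · simp
      · intro k hk; simp [hk]
    rw [this]; simp
  have hcos : ∀ z : ℂ, ‖Complex.cos z‖ ≤ Real.exp |z.im| := by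
    intro z
    rw [Complex.cos]
    have h1 : ‖Complex.exp (z * Complex.I)‖ ≤ Real.exp |z.im| := by
      rw [Complex.norm_exp]; simp [neg_le_abs]
    have h2 : ‖Complex.exp (-z * Complex.I)‖ ≤ Real.exp |z.im| := by
      rw [Complex.norm_exp]; simp [le_abs_self]
    rw [norm_div]
    have := norm_add_le (Complex.exp (z * Complex.I)) (Complex.exp (-z * Complex.I))
    simp only [Complex.norm_ofNat]
    linarith
  -- mean value inequality for `τ ↦ sin (τ a)` on the interval between `0` and `t`
  have hmv := (convex_uIcc (0 : ℝ) t).norm_image_sub_le_of_norm_hasDerivWithin_le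
    (f := fun τ : ℝ => Complex.sin (τ * a)) (f' := fun τ : ℝ => Complex.cos (τ * a) * a)
    (C := Real.exp (|t| * |a.im|) * ‖a‖) (x := 0) (y := t)
    (fun τ _ => by
      have h1 : HasDerivAt (fun τ : ℝ => (τ : ℂ) * a) a τ := by
        simpa using (Complex.ofRealCLM.hasDerivAt (x := τ)).mul_const a
      exact ((Complex.hasDerivAt_sin _).comp τ h1).hasDerivWithinAt)
    (fun τ hτ => by
      rw [norm_mul]
      gcongr
      refine (hcos _).trans (Real.exp_le_exp.2 ?_)
      have : |τ| ≤ |t| := by simpa using Set.abs_sub_left_of_mem_uIcc hτ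
      simp only [Complex.mul_im, Complex.ofReal_re, Complex.ofReal_im, zero_mul, add_zero,
        abs_mul]
      gcongr)
    Set.left_mem_uIcc Set.right_mem_uIcc
  rw [← mul_sincSqrt_sq] at hmv
  have ha' : 0 < ‖a‖ := norm_pos_iff.2 ha
  simp only [norm_mul, Complex.ofReal_zero, zero_mul, Complex.sin_zero, sub_zero,
    Real.norm_eq_abs] at hmv
  refine le_of_mul_le_mul_left (hmv.trans (le_of_eq ?_)) ha'
  ring

/-- The square root of `(q + iτe)² + m²`, with `e` a unit vector, has imaginary part at most `|τ|`
in absolute value. This is where the mass-shell condition meets the light cone. -/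
lemma abs_im_le_of_sq_eq {m : ℝ} {q e : Fin 3 → ℝ} (he : ∑ j, e j ^ 2 = 1) {τ : ℝ} {a : ℂ}
    (ha : a ^ 2 = ∑ j, ((q j : ℂ) + τ * Complex.I * e j) ^ 2 + m ^ 2) : |a.im| ≤ |τ| := by
  have hcs : (∑ j, q j * e j) ^ 2 ≤ ∑ j, q j ^ 2 := by
    simpa [he] using Finset.sum_mul_sq_le_sq_mul_sq Finset.univ q e
  have hre := congrArg Complex.re ha
  have him := congrArg Complex.im ha
  simp only [Fin.sum_univ_three, pow_two, Complex.mul_re, Complex.mul_im, Complex.add_re,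
    Complex.add_im, Complex.ofReal_re, Complex.ofReal_im, Complex.I_re, Complex.I_im] at hre him
  rw [Fin.sum_univ_three] at he
  simp only [Fin.sum_univ_three] at hcs
  rw [← sq_le_sq]
  by_contra! hlt
  set Q := q 0 ^ 2 + q 1 ^ 2 + q 2 ^ 2
  set D := q 0 * e 0 + q 1 * e 1 + q 2 * e 2
  have h1 : a.re ^ 2 = a.im ^ 2 + Q + m ^ 2 - τ ^ 2 := by
    simp only [Q]; linear_combination hre - τ ^ 2 * he
  have h2 : a.re * a.im = τ * D := by simp only [D]; linear_combination him / 2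
  have h3 : (a.re * a.im) ^ 2 = τ ^ 2 * D ^ 2 := by rw [h2]; ring
  have hQ : 0 ≤ Q := by positivity
  have h4 : Q < a.re ^ 2 := by nlinarith [sq_nonneg m]
  have h5 : 0 < a.im ^ 2 := (sq_nonneg τ).trans_lt hlt
  have h6 : τ ^ 2 * D ^ 2 ≤ a.im ^ 2 * Q := by gcongr
  nlinarith [mul_lt_mul_of_pos_left h4 h5]

/-! ### The contour shift -/

/-- A parametric integral of holomorphic functions is holomorphic if the functions are dominated,
locally uniformly in the parameter; Cauchy's estimate supplies the bound on the derivative. -/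
lemma differentiable_integral {F : ℂ → (Fin 3 → ℝ) → ℂ}
    (hmeas : ∀ s, AEStronglyMeasurable (F s) volume)
    (hdiff : ∀ p, Differentiable ℂ fun s => F s p)
    (hbd : ∀ R : ℝ, ∃ B : (Fin 3 → ℝ) → ℝ, Integrable B ∧ ∀ s p, ‖s‖ ≤ R → ‖F s p‖ ≤ B p) :
    Differentiable ℂ fun s => ∫ p, F s p := by
  intro s₀
  obtain ⟨B, hB, hFB⟩ := hbd (‖s₀‖ + 2)
  have hderiv : ∀ s ∈ Metric.ball s₀ 1, ∀ p, ‖deriv (fun s => F s p) s‖ ≤ B p := by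
    intro s hs p
    have := Complex.norm_deriv_le_of_forall_mem_sphere_norm_le (c := s) (R := 1) (C := B p)
      (f := fun s => F s p) one_pos (hdiff p).diffContOnCl (fun z hz => hFB z p ?_)
    · simpa using this
    · rw [mem_sphere_iff_norm] at hz
      rw [mem_ball_iff_norm] at hs
      calc ‖z‖ = ‖(z - s) + (s - s₀) + s₀‖ := by congr 1; ring
        _ ≤ ‖z - s‖ + ‖s - s₀‖ + ‖s₀‖ := norm_add₃_le
        _ ≤ _ := by linarith
  refine (hasDerivAt_integral_of_dominated_loc_of_deriv_le (F := F)
    (F' := fun s p => deriv (fun s => F s p) s) (bound := B)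
    (Metric.ball_mem_nhds s₀ one_pos) (.of_forall hmeas) ?_ ?_ ?_ hB ?_).2.differentiableAt
  · exact hB.mono' (hmeas _) (.of_forall fun p => hFB _ _ (by linarith))
  · -- the derivative in `s` is a pointwise limit of the difference quotients
    refine aestronglyMeasurable_of_tendsto_ae (Filter.atTop)
      (f := fun (n : ℕ) p => ((1 / ((n : ℂ) + 1)))⁻¹ • (F (s₀ + 1 / ((n : ℂ) + 1)) p - F s₀ p))
      (fun n => AEStronglyMeasurable.const_smul ((hmeas (s₀ + 1 / ((n : ℂ) + 1))).sub (hmeas s₀))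
        ((1 / ((n : ℂ) + 1))⁻¹)) (.of_forall fun p => ?_)
    have h := hasDerivAt_iff_tendsto_slope_zero.1 (hdiff p s₀).hasDerivAt
    refine h.comp (tendsto_nhdsWithin_iff.2 ⟨?_, .of_forall fun n => ?_⟩)
    · exact tendsto_one_div_add_atTop_nhds_zero_nat (𝕜 := ℂ)
    · simp only [Set.mem_compl_iff, Set.mem_singleton_iff]
      exact one_div_ne_zero (Nat.cast_add_one_ne_zero n)
  · exact .of_forall fun p s hs => hderiv s hs p
  · exact .of_forall fun p s _ => (hdiff p s).hasDerivAt

lemma integrable_gauss {ε : ℝ} (hε : 0 < ε) :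
    Integrable fun p : Fin 3 → ℝ => Real.exp (-ε * ∑ j, p j ^ 2) := by
  have := Integrable.fintype_prod (ι := Fin 3) (μ := fun _ => volume)
    (f := fun _ (x : ℝ) => Real.exp (-ε * x ^ 2)) (fun _ => integrable_exp_neg_mul_sq hε)
  refine this.congr (.of_forall fun p => ?_)
  simp only [← Real.exp_sum, Finset.mul_sum]

lemma integral_gauss (ε : ℝ) :
    ∫ p : Fin 3 → ℝ, Real.exp (-ε * ∑ j, p j ^ 2) = √(Real.pi / ε) ^ 3 := by
  have := integral_fintype_prod_volume_eq_pow (ι := Fin 3) (fun x : ℝ => Real.exp (-ε * x ^ 2))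
  rw [integral_gaussian] at this
  simp only [← Real.exp_sum, ← Finset.mul_sum] at this
  simpa using this

/-- The function `k ↦ exp (-ε k²) exp (-i k·z) sin (t √(k² + m²)) / √(k² + m²)` on `ℂ³`, with the
bilinear `k²` and `k·z`, at the point `k = p + s e`. -/
noncomputable def shiftedKernel (m ε t : ℝ) (z e : Fin 3 → ℝ) (s : ℂ) (p : Fin 3 → ℝ) : ℂ :=
  Complex.exp (-ε * ∑ j, ((p j : ℂ) + s * e j) ^ 2) *
    Complex.exp (-Complex.I * ∑ j, ((p j : ℂ) + s * e j) * z j) *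
      sincSqrt t (∑ j, ((p j : ℂ) + s * e j) ^ 2 + m ^ 2)

lemma norm_shiftedKernel_le (m ε t : ℝ) (z : Fin 3 → ℝ) {e : Fin 3 → ℝ} (he : ∑ j, e j ^ 2 = 1)
    (s : ℂ) (p : Fin 3 → ℝ) :
    ‖shiftedKernel m ε t z e s p‖ ≤
      Real.exp (-ε * ∑ j, (p j + s.re * e j) ^ 2) * (Real.exp (ε * s.im ^ 2) *
        Real.exp (s.im * ∑ j, e j * z j) * (|t| * Real.exp (|t| * |s.im|))) := by
  have hq : ∀ j, (p j : ℂ) + s * e j = ((p j + s.re * e j : ℝ) : ℂ) + s.im * Complex.I * e j := by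
    intro j
    conv_lhs => rw [← Complex.re_add_im s]
    push_cast; ring
  have hsplit : ∀ A B X Y : ℝ,
      Real.exp A * (Real.exp B * X * Y) = Real.exp (A + B) * X * Y := fun A B X Y => by
    rw [Real.exp_add]; ring
  rw [shiftedKernel, norm_mul, norm_mul, hsplit]
  gcongr
  · rw [Complex.norm_exp]
    refine le_of_eq (congrArg _ ?_)
    simp only [hq, Fin.sum_univ_three, pow_two, Complex.mul_re, Complex.mul_im, Complex.add_re,
      Complex.add_im, Complex.ofReal_re, Complex.ofReal_im, Complex.I_re, Complex.I_im,
      Complex.neg_re, Complex.neg_im]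
    rw [Fin.sum_univ_three] at he
    linear_combination ε * s.im ^ 2 * he
  · rw [Complex.norm_exp]
    refine le_of_eq (congrArg _ ?_)
    simp only [Fin.sum_univ_three, Complex.mul_re, Complex.mul_im, Complex.add_re,
      Complex.add_im, Complex.ofReal_re, Complex.ofReal_im, Complex.I_re, Complex.I_im,
      Complex.neg_re, Complex.neg_im]
    ring
  · obtain ⟨a, ha⟩ := IsAlgClosed.exists_pow_nat_eq
      (∑ j, ((p j : ℂ) + s * e j) ^ 2 + m ^ 2) (n := 2) two_pos
    rw [← ha]
    refine (norm_sincSqrt_sq_le t a).trans ?_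
    simp only [hq] at ha
    have him := abs_im_le_of_sq_eq he ha
    exact mul_le_mul_of_nonneg_left
      (Real.exp_le_exp.2 (mul_le_mul_of_nonneg_left him (abs_nonneg t))) (abs_nonneg t)

lemma measurable_shiftedKernel (m ε t : ℝ) (z e : Fin 3 → ℝ) (s : ℂ) :
    AEStronglyMeasurable (shiftedKernel m ε t z e s) volume := by
  have := (differentiable_sincSqrt t).continuous
  refine Continuous.aestronglyMeasurable ?_
  unfold shiftedKernel
  fun_prop

lemma differentiable_integral_shiftedKernel (m t : ℝ) {ε : ℝ} (hε : 0 < ε) (z : Fin 3 → ℝ)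
    {e : Fin 3 → ℝ} (he : ∑ j, e j ^ 2 = 1) :
    Differentiable ℂ fun s => ∫ p, shiftedKernel m ε t z e s p := by
  refine differentiable_integral (measurable_shiftedKernel m ε t z e) (fun p => ?_) fun R => ?_
  · have := differentiable_sincSqrt t
    unfold shiftedKernel
    fun_prop
  · refine ⟨fun p => Real.exp (-(ε / 2) * ∑ j, p j ^ 2) * (Real.exp (ε * R ^ 2) *
      (Real.exp (ε * R ^ 2) * Real.exp (R * |∑ j, e j * z j|) * (|t| * Real.exp (|t| * R)))),
      (integrable_gauss (half_pos hε)).mul_const _, fun s p hs => ?_⟩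
    refine (norm_shiftedKernel_le m ε t z he s p).trans ?_
    have hR : 0 ≤ R := (norm_nonneg s).trans hs
    have hre : |s.re| ≤ R := (Complex.abs_re_le_norm s).trans hs
    have him : |s.im| ≤ R := (Complex.abs_im_le_norm s).trans hs
    have hre2 : s.re ^ 2 ≤ R ^ 2 := sq_le_sq' (abs_le.1 hre).1 (abs_le.1 hre).2
    have him2 : s.im ^ 2 ≤ R ^ 2 := sq_le_sq' (abs_le.1 him).1 (abs_le.1 him).2
    have hgauss : Real.exp (-ε * ∑ j, (p j + s.re * e j) ^ 2) ≤
        Real.exp (-(ε / 2) * ∑ j, p j ^ 2) * Real.exp (ε * R ^ 2) := by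
      rw [← Real.exp_add, Real.exp_le_exp]
      -- `|p|² ≤ 2 |p + σ e|² + 2 σ²` for a unit vector `e`
      have key : ∑ j, p j ^ 2 ≤ 2 * ∑ j, (p j + s.re * e j) ^ 2 + 2 * s.re ^ 2 := by
        rw [Fin.sum_univ_three] at he
        simp only [Fin.sum_univ_three]
        have h : s.re ^ 2 = s.re ^ 2 * (e 0 ^ 2 + e 1 ^ 2 + e 2 ^ 2) := by rw [he, mul_one]
        rw [h]
        nlinarith [sq_nonneg (p 0 + 2 * (s.re * e 0)), sq_nonneg (p 1 + 2 * (s.re * e 1)),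
          sq_nonneg (p 2 + 2 * (s.re * e 2))]
      nlinarith
    have hlin : s.im * ∑ j, e j * z j ≤ R * |∑ j, e j * z j| := by
      refine (le_abs_self _).trans ?_
      rw [abs_mul]
      gcongr
    beta_reduce
    rw [← mul_assoc (Real.exp (-(ε / 2) * _))]
    refine mul_le_mul hgauss ?_ (by positivity) (by positivity)
    refine mul_le_mul ?_ ?_ (by positivity) (by positivity)
    · exact mul_le_mul (Real.exp_le_exp.2 (by gcongr)) (Real.exp_le_exp.2 hlin)
        (by positivity) (by positivity)
    · exact mul_le_mul_of_nonneg_left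
        (Real.exp_le_exp.2 (mul_le_mul_of_nonneg_left him (abs_nonneg t))) (abs_nonneg t)

/-- Both sides are entire in `s` and agree for real `s` by translation invariance of Lebesgue
measure. -/
lemma integral_shiftedKernel_eq (m t : ℝ) {ε : ℝ} (hε : 0 < ε) (z : Fin 3 → ℝ)
    {e : Fin 3 → ℝ} (he : ∑ j, e j ^ 2 = 1) (s : ℂ) :
    ∫ p, shiftedKernel m ε t z e s p = ∫ p, shiftedKernel m ε t z e 0 p := by
  have hreal : ∀ σ : ℝ, ∫ p, shiftedKernel m ε t z e σ p = ∫ p, shiftedKernel m ε t z e 0 p := by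
    intro σ
    rw [← integral_add_right_eq_self (fun p => shiftedKernel m ε t z e 0 p) (σ • e)]
    simp [shiftedKernel]
  have hd := differentiable_integral_shiftedKernel m t hε z he
  have h1 : AnalyticOnNhd ℂ (fun s => ∫ p, shiftedKernel m ε t z e s p) Set.univ :=
    fun s _ => hd.analyticAt s
  have h2 : AnalyticOnNhd ℂ (fun _ : ℂ => ∫ p, shiftedKernel m ε t z e 0 p) Set.univ :=
    fun s _ => analyticAt_const
  refine congrFun (h1.eq_of_frequently_eq h2 (z₀ := 0) ?_) s
  have ht : Filter.Tendsto (fun n : ℕ => (1 / ((n : ℂ) + 1))) Filter.atTop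
      (nhdsWithin 0 {0}ᶜ) := by
    refine tendsto_nhdsWithin_iff.2
      ⟨tendsto_one_div_add_atTop_nhds_zero_nat (𝕜 := ℂ), .of_forall fun n => ?_⟩
    simp only [Set.mem_compl_iff, Set.mem_singleton_iff]
    exact one_div_ne_zero (Nat.cast_add_one_ne_zero n)
  refine ht.frequently (Filter.Frequently.of_forall fun n => ?_)
  have := hreal (1 / ((n : ℝ) + 1))
  push_cast at this
  exact this

/-- Exponential decay of the regularized commutator function in the spacelike region, obtained by
the shift `p ↦ p - i lam z / |z|`. -/
lemma norm_integral_kernel_le (m t : ℝ) {ε lam : ℝ} (hε : 0 < ε) (hlam : 0 ≤ lam)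
    (z : Fin 3 → ℝ) (hz : 0 < √(∑ j, z j ^ 2)) :
    ‖∫ p : Fin 3 → ℝ, Complex.exp (-ε * ∑ j, (p j : ℂ) ^ 2) *
      Complex.exp (-Complex.I * ∑ j, (p j : ℂ) * z j) *
        sincSqrt t (∑ j, (p j : ℂ) ^ 2 + m ^ 2)‖ ≤
      √(Real.pi / ε) ^ 3 *
        (|t| * Real.exp (ε * lam ^ 2 - lam * (√(∑ j, z j ^ 2) - |t|))) := by
  set r := √(∑ j, z j ^ 2) with hr
  have hr2 : ∑ j, z j ^ 2 = r ^ 2 := by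
    rw [hr, Real.sq_sqrt (Finset.sum_nonneg fun j _ => sq_nonneg _)]
  set e : Fin 3 → ℝ := fun j => z j / r with he_def
  have he : ∑ j, e j ^ 2 = 1 := by
    simp only [he_def, div_pow, ← Finset.sum_div, hr2]
    exact div_self (by positivity)
  have hez : ∑ j, e j * z j = r := by
    have : ∀ j, e j * z j = z j ^ 2 / r := fun j => by simp only [he_def]; ring
    simp only [this, ← Finset.sum_div, hr2]
    field_simp
  have h0 : ∀ p : Fin 3 → ℝ, Complex.exp (-ε * ∑ j, (p j : ℂ) ^ 2) *
      Complex.exp (-Complex.I * ∑ j, (p j : ℂ) * z j) *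
        sincSqrt t (∑ j, (p j : ℂ) ^ 2 + m ^ 2) = shiftedKernel m ε t z e 0 p := by
    intro p; simp [shiftedKernel]
  simp only [h0]
  rw [← integral_shiftedKernel_eq m t hε z he (-(lam * Complex.I)), ← integral_gauss,
    ← integral_mul_const]
  refine norm_integral_le_of_norm_le ((integrable_gauss hε).mul_const _) (.of_forall fun p => ?_)
  refine (norm_shiftedKernel_le m ε t z he _ p).trans (le_of_eq ?_)
  have h1 : (-(lam * Complex.I)).re = 0 := by simp
  have h2 : (-(lam * Complex.I)).im = -lam := by simp
  simp only [h1, h2, hez, zero_mul, add_zero, abs_neg, abs_of_nonneg hlam]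
  congr 1
  rw [← mul_assoc, mul_comm _ |t|, mul_assoc, ← Real.exp_add, ← Real.exp_add]
  ring_nf

/-! ### The regularized two-point function -/

lemma energyOf_sq (m : ℝ) (p : Fin 3 → ℝ) : energyOf m p ^ 2 = ∑ j, p j ^ 2 + m ^ 2 :=
  Real.sq_sqrt (by positivity)

lemma le_energyOf {m : ℝ} (p : Fin 3 → ℝ) : m ≤ energyOf m p :=
  Real.le_sqrt_of_sq_le (le_add_of_nonneg_left (by positivity))

lemma continuous_energyOf (m : ℝ) : Continuous (energyOf m) := by
  unfold energyOf
  fun_prop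

lemma continuous_inv_energyOf {m : ℝ} (hm : 0 < m) :
    Continuous fun p => (2 * energyOf m p)⁻¹ :=
  ((continuous_energyOf m).const_mul 2).inv₀ fun p =>
    (mul_pos two_pos (hm.trans_le (le_energyOf p))).ne'

/-- The integrand `exp (-ε |p|²) (2 ω)⁻¹ exp (i (ω t - p·z))` of the regularized two-point function
at the spacetime point `(t, z)`. -/
noncomputable def regWave (m ε t : ℝ) (z p : Fin 3 → ℝ) : ℂ :=
  ((Real.exp (-ε * ∑ j, p j ^ 2) * (2 * energyOf m p)⁻¹ : ℝ) : ℂ) *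
    Complex.exp (Complex.I * ((energyOf m p * t - ∑ j, p j * z j : ℝ) : ℂ))

lemma norm_cexp_I_mul (θ : ℝ) : ‖Complex.exp (Complex.I * (θ : ℂ))‖ = 1 := by
  rw [mul_comm, Complex.norm_exp_ofReal_mul_I]

lemma norm_regWave_le {m : ℝ} (hm : 0 < m) (ε t : ℝ) (z p : Fin 3 → ℝ) :
    ‖regWave m ε t z p‖ ≤ Real.exp (-ε * ∑ j, p j ^ 2) * (2 * m)⁻¹ := by
  have h := le_energyOf (m := m) p
  have h' : 0 < energyOf m p := hm.trans_le h
  rw [regWave, norm_mul, norm_cexp_I_mul, mul_one, Complex.norm_real, Real.norm_of_nonneg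
    (by positivity)]
  gcongr

lemma integrable_regWave {m : ℝ} (hm : 0 < m) {ε : ℝ} (hε : 0 < ε) (t : ℝ) (z : Fin 3 → ℝ) :
    Integrable (regWave m ε t z) := by
  refine ((integrable_gauss hε).mul_const (2 * m)⁻¹).mono' ?_
    (.of_forall fun p => norm_regWave_le hm ε t z p)
  have h1 := continuous_energyOf m
  have h2 := continuous_inv_energyOf hm
  refine Continuous.aestronglyMeasurable ?_
  unfold regWave
  fun_prop

lemma regWave_sub_conj_neg {m : ℝ} (hm : 0 < m) (ε t : ℝ) (z p : Fin 3 → ℝ) :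
    regWave m ε t z p - (starRingEnd ℂ) (regWave m ε t z (-p)) =
      Complex.I * (Complex.exp (-ε * ∑ j, (p j : ℂ) ^ 2) *
      Complex.exp (-Complex.I * ∑ j, (p j : ℂ) * z j) *
        sincSqrt t (∑ j, (p j : ℂ) ^ 2 + m ^ 2)) := by
  have hω : energyOf m (-p) = energyOf m p := by simp [energyOf]
  have hpos : (energyOf m p : ℂ) ≠ 0 :=
    Complex.ofReal_ne_zero.2 (hm.trans_le (le_energyOf p)).ne'
  have hS : sincSqrt t (∑ j, (p j : ℂ) ^ 2 + m ^ 2)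
      = Complex.sin (t * energyOf m p) / energyOf m p := by
    rw [eq_div_iff hpos, mul_comm, ← mul_sincSqrt_sq]
    congr 2
    exact_mod_cast congrArg Complex.ofReal (energyOf_sq m p).symm
  rw [hS, regWave, regWave, hω, map_mul, Complex.conj_ofReal, ← Complex.exp_conj, map_mul,
    Complex.conj_ofReal, Complex.conj_I, Complex.sin]
  simp only [Pi.neg_apply, neg_sq, neg_mul, Finset.sum_neg_distrib, sub_neg_eq_add]
  push_cast
  have e1 : Complex.exp (Complex.I * (energyOf m p * t - ∑ j, (p j : ℂ) * z j)) =
      Complex.exp (t * energyOf m p * Complex.I) *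
        Complex.exp (-(Complex.I * ∑ j, (p j : ℂ) * z j)) := by
    rw [← Complex.exp_add]; congr 1; ring
  have e2 : Complex.exp (-(Complex.I * (energyOf m p * t + ∑ j, (p j : ℂ) * z j))) =
      Complex.exp (-(t * energyOf m p * Complex.I)) *
        Complex.exp (-(Complex.I * ∑ j, (p j : ℂ) * z j)) := by
    rw [← Complex.exp_add]; congr 1; ring
  rw [e1, e2]
  generalize Complex.exp (t * energyOf m p * Complex.I) = u
  generalize Complex.exp (-(t * energyOf m p * Complex.I)) = v
  field_simp
  linear_combination (u - v) * Complex.I_sq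

lemma abs_im_integral_regWave_le {m : ℝ} (hm : 0 < m) (t : ℝ) {ε lam : ℝ} (hε : 0 < ε)
    (hlam : 0 ≤ lam) (z : Fin 3 → ℝ) (hz : 0 < √(∑ j, z j ^ 2)) :
    |(∫ p, regWave m ε t z p).im| ≤ √(Real.pi / ε) ^ 3 *
        (|t| * Real.exp (ε * lam ^ 2 - lam * (√(∑ j, z j ^ 2) - |t|))) := by
  have hinteg := integrable_regWave hm hε t z
  have h1 : (∫ p, regWave m ε t z p) - (starRingEnd ℂ) (∫ p, regWave m ε t z p) =
      Complex.I * ∫ p : Fin 3 → ℝ, Complex.exp (-ε * ∑ j, (p j : ℂ) ^ 2) *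
      Complex.exp (-Complex.I * ∑ j, (p j : ℂ) * z j) *
        sincSqrt t (∑ j, (p j : ℂ) ^ 2 + m ^ 2) := by
    rw [← integral_conj, ← integral_neg_eq_self (fun p => (starRingEnd ℂ) (regWave m ε t z p)),
      ← integral_sub hinteg, ← integral_const_mul]
    · exact integral_congr_ae (.of_forall fun p => regWave_sub_conj_neg hm ε t z p)
    · exact (Complex.conjLIE.toContinuousLinearEquiv.integrable_comp_iff.2 hinteg).comp_neg
  rw [Complex.sub_conj] at h1
  have h2 := congrArg norm h1
  rw [norm_mul, norm_mul, Complex.norm_I, one_mul, mul_one, Complex.norm_real, Real.norm_eq_abs,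
    abs_mul, abs_two] at h2
  have h3 := norm_integral_kernel_le m t hε hlam z hz
  rw [← h2] at h3
  linarith [abs_nonneg (∫ p, regWave m ε t z p).im]

/-! ### Reduction of the mass-shell integral to the two-point function -/

lemma continuous_massShell (m : ℝ) :
    Continuous fun p : Fin 3 → ℝ => (Fin.cons (energyOf m p) p : Fin 4 → ℝ) := by
  have := continuous_energyOf m
  refine continuous_pi fun i => ?_
  refine Fin.cases ?_ (fun j => ?_) i
  · simpa using this
  · simpa using continuous_apply j

lemma minkowskiPairing_cons (a : ℝ) (p : Fin 3 → ℝ) (x : Fin 4 → ℝ) :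
    minkowskiPairing (Fin.cons a p) x = a * x 0 - ∑ j, p j * x j.succ := by
  rw [Fin.sum_univ_three]
  change a * x 0 - p 0 * x 1 - p 1 * x 2 - p 2 * x 3 =
    a * x 0 - (p 0 * x 1 + p 1 * x 2 + p 2 * x 3)
  ring

lemma stronglyMeasurable_minkFourier {f : (Fin 4 → ℝ) → ℝ} (hf : Continuous f) :
    StronglyMeasurable (minkFourier f) := by
  unfold minkFourier
  refine StronglyMeasurable.integral_prod_right
    (f := fun p x => (f x : ℂ) * Complex.exp (Complex.I * (minkowskiPairing p x : ℂ))) ?_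
  refine Continuous.stronglyMeasurable ?_
  simp only [Function.uncurry_def, minkowskiPairing]
  fun_prop

lemma integral_massShell {m : ℝ} (hm : 0 < m) {K : (Fin 4 → ℝ) → ℂ} (hK : StronglyMeasurable K) :
    ∫ p, K p ∂(massShellMeasure m) =
      ∫ p : Fin 3 → ℝ, (2 * energyOf m p)⁻¹ • K (Fin.cons (energyOf m p) p) := by
  have hden := (continuous_inv_energyOf hm).measurable
  rw [massShellMeasure, integral_map (continuous_massShell m).measurable.aemeasurable
    hK.aestronglyMeasurable, integral_withDensity_eq_integral_toReal_smul
    hden.ennreal_ofReal (.of_forall fun p => ENNReal.ofReal_lt_top)]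
  refine integral_congr_ae (.of_forall fun p => ?_)
  have : 0 < energyOf m p := hm.trans_le (le_energyOf p)
  simp only
  rw [ENNReal.toReal_ofReal (by positivity)]

lemma conj_minkFourier_mul (m ε : ℝ) (f g : (Fin 4 → ℝ) → ℝ) (p : Fin 3 → ℝ) :
    Real.exp (-ε * ∑ j, p j ^ 2) • (2 * energyOf m p)⁻¹ •
      ((starRingEnd ℂ) (minkFourier f (Fin.cons (energyOf m p) p)) *
        minkFourier g (Fin.cons (energyOf m p) p)) =
    ∫ w : (Fin 4 → ℝ) × (Fin 4 → ℝ), ((f w.1 * g w.2 : ℝ) : ℂ) *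
      regWave m ε (w.2 0 - w.1 0) (fun j => w.2 j.succ - w.1 j.succ) p := by
  rw [minkFourier, minkFourier, ← integral_conj, ← integral_prod_mul, smul_smul, ← integral_smul,
    ← Measure.volume_eq_prod]
  refine integral_congr_ae (.of_forall fun w => ?_)
  simp only [regWave, map_mul, Complex.conj_ofReal, ← Complex.exp_conj, Complex.conj_I,
    minkowskiPairing_cons, Complex.real_smul, mul_sub, Finset.sum_sub_distrib]
  have : ∀ a b c d : ℝ, Complex.exp (Complex.I * ((a - b - (c - d) : ℝ) : ℂ)) =
      Complex.exp (-Complex.I * ((b - d : ℝ) : ℂ)) *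
        Complex.exp (Complex.I * ((a - c : ℝ) : ℂ)) := by
    intro a b c d
    rw [← Complex.exp_add]; congr 1; push_cast; ring
  rw [this]
  push_cast
  ring

/-- The regularized form of the theorem. The numbers `δ` and `T` control `|z| - |t|` and `|t|` for
all differences `(t, z) = y - x` of points of the two supports. -/
lemma abs_im_regularized_le {m : ℝ} (hm : 0 < m) {f g : (Fin 4 → ℝ) → ℝ}
    (hf : Continuous f) (hfc : HasCompactSupport f) (hg : Continuous g) (hgc : HasCompactSupport g)
    {δ T : ℝ} (hδ : 0 < δ)
    (hsep : ∀ x ∈ tsupport f, ∀ y ∈ tsupport g,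
      δ ≤ √(∑ j : Fin 3, (y j.succ - x j.succ) ^ 2) - |y 0 - x 0|)
    (hT : ∀ x ∈ tsupport f, ∀ y ∈ tsupport g, |y 0 - x 0| ≤ T)
    {ε lam : ℝ} (hε : 0 < ε) (hlam : 0 ≤ lam) :
    |(∫ p : Fin 3 → ℝ, Real.exp (-ε * ∑ j, p j ^ 2) • (2 * energyOf m p)⁻¹ •
      ((starRingEnd ℂ) (minkFourier f (Fin.cons (energyOf m p) p)) *
        minkFourier g (Fin.cons (energyOf m p) p))).im| ≤
      (∫ w : (Fin 4 → ℝ) × (Fin 4 → ℝ), ‖f w.1‖ * ‖g w.2‖) *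
        (√(Real.pi / ε) ^ 3 * (T * Real.exp (ε * lam ^ 2 - lam * δ))) := by
  simp only [conj_minkFourier_mul]
  have hfi : Integrable f := hf.integrable_of_hasCompactSupport hfc
  have hgi : Integrable g := hg.integrable_of_hasCompactSupport hgc
  have hfg : Integrable fun w : (Fin 4 → ℝ) × (Fin 4 → ℝ) => ‖f w.1‖ * ‖g w.2‖ :=
    hfi.norm.mul_prod hgi.norm
  have hinteg : Integrable (Function.uncurry fun (p : Fin 3 → ℝ) (w : (Fin 4 → ℝ) × (Fin 4 → ℝ)) =>
      ((f w.1 * g w.2 : ℝ) : ℂ) *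
        regWave m ε (w.2 0 - w.1 0) (fun j => w.2 j.succ - w.1 j.succ) p)
      (volume.prod volume) := by
    refine (((integrable_gauss hε).mul_const (2 * m)⁻¹).mul_prod hfg).mono' ?_
      (.of_forall fun q => ?_)
    · have h1 := continuous_energyOf m
      have h2 := continuous_inv_energyOf hm
      have h3 := h2.comp (continuous_fst (X := Fin 3 → ℝ) (Y := (Fin 4 → ℝ) × (Fin 4 → ℝ)))
      simp only [Function.comp_def] at h3
      refine Continuous.aestronglyMeasurable ?_
      simp only [Function.uncurry_def, regWave, Complex.ofReal_mul]
      refine Continuous.mul (by fun_prop) (Continuous.mul (Continuous.mul (by fun_prop) ?_)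
        (by fun_prop))
      exact Complex.continuous_ofReal.comp h3
    · simp only [Function.uncurry_def]
      rw [norm_mul, Complex.norm_real, norm_mul, mul_comm]
      gcongr
      exact norm_regWave_le hm _ _ _ _
  rw [integral_integral_swap hinteg]
  have hinteg2 := hinteg.integral_prod_right
  simp only [Function.uncurry_apply_pair] at hinteg2
  have him := integral_im (𝕜 := ℂ) hinteg2
  simp only [RCLike.im_eq_complex_im] at him
  rw [← him, ← Real.norm_eq_abs, ← integral_mul_const]
  refine norm_integral_le_of_norm_le (hfg.mul_const _) (.of_forall fun w => ?_)
  rw [integral_const_mul, Complex.im_ofReal_mul, norm_mul, norm_mul]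
  by_cases hw : w.1 ∈ tsupport f ∧ w.2 ∈ tsupport g
  · have h1 := hsep _ hw.1 _ hw.2
    have h2 := hT _ hw.1 _ hw.2
    have hT0 : 0 ≤ T := (abs_nonneg _).trans h2
    gcongr
    refine (abs_im_integral_regWave_le hm _ hε hlam _ ?_).trans ?_
    · linarith [abs_nonneg (w.2 0 - w.1 0)]
    · gcongr
  · have h0 : ‖f w.1‖ * ‖g w.2‖ = 0 := by
      rcases not_and_or.1 hw with h | h
      · simp [image_eq_zero_of_notMem_tsupport h]
      · simp [image_eq_zero_of_notMem_tsupport h]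
    rw [h0, zero_mul, zero_mul]
/-- **locality of the free scalar two-point symplectic form.**  If `f, g`
are smooth compactly supported real test functions on `ℝ⁴` with spacelike separated
supports, then `∫ conj(f̂) ĝ dΩ_m⁺` is real. -/
theorem integral_fourier_mass_shell_real_of_spacelike
    (m : ℝ) (hm : 0 < m)
    (f g : (Fin 4 → ℝ) → ℝ)
    (hf : ContDiff ℝ (⊤ : ℕ∞) f) (hfc : HasCompactSupport f)
    (hg : ContDiff ℝ (⊤ : ℕ∞) g) (hgc : HasCompactSupport g)
    (hsep : ∀ x ∈ tsupport f, ∀ y ∈ tsupport g, minkowskiQ (x - y) < 0) :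
    (∫ p : Fin 4 → ℝ,
        (starRingEnd ℂ) (minkFourier f p) * minkFourier g p ∂(massShellMeasure m)).im
      = 0 := by
  have hK : StronglyMeasurable fun p => (starRingEnd ℂ) (minkFourier f p) * minkFourier g p :=
    (Complex.continuous_conj.comp_stronglyMeasurable
      (stronglyMeasurable_minkFourier hf.continuous)).mul
      (stronglyMeasurable_minkFourier hg.continuous)
  rw [integral_massShell hm hK]
  set Φ : (Fin 3 → ℝ) → ℂ := fun p => (2 * energyOf m p)⁻¹ •
    ((starRingEnd ℂ) (minkFourier f (Fin.cons (energyOf m p) p)) *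
        minkFourier g (Fin.cons (energyOf m p) p)) with hΦ
  change (∫ p, Φ p).im = 0
  -- Without integrability the Bochner integral is `0` by convention.
  by_cases hinteg : Integrable Φ
  swap
  · rw [integral_undef hinteg, Complex.zero_im]
  have hcomp : IsCompact (tsupport f ×ˢ tsupport g) := hfc.isCompact.prod hgc.isCompact
  obtain ⟨δ, hδ, hδ'⟩ := hcomp.exists_forall_le' (a := 0)
    (f := fun w : (Fin 4 → ℝ) × (Fin 4 → ℝ) =>
      √(∑ j : Fin 3, (w.2 j.succ - w.1 j.succ) ^ 2) - |w.2 0 - w.1 0|)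
    (by fun_prop) (fun w hw => by
      have h := hsep w.1 hw.1 w.2 hw.2
      rw [sub_pos]
      refine Real.lt_sqrt_of_sq_lt ?_
      rw [sq_abs, Fin.sum_univ_three]
      change (w.2 0 - w.1 0) ^ 2 < (w.2 1 - w.1 1) ^ 2 + (w.2 2 - w.1 2) ^ 2 + (w.2 3 - w.1 3) ^ 2
      simp only [minkowskiQ, Pi.sub_apply] at h
      linarith)
  obtain ⟨T, hT⟩ := hcomp.exists_bound_of_continuousOn
    (f := fun w : (Fin 4 → ℝ) × (Fin 4 → ℝ) => w.2 0 - w.1 0) (by fun_prop)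
  -- Regularization parameter `ε = 1 / n²` and contour shift `n`, for `n ≥ 1`.
  have hlim : Filter.Tendsto
      (fun n : ℕ => (∫ p, Real.exp (-(1 / (n : ℝ) ^ 2) * ∑ j, p j ^ 2) • Φ p).im)
      Filter.atTop (nhds (∫ p, Φ p).im) := by
    refine (Complex.continuous_im.tendsto _).comp ?_
    refine tendsto_integral_of_dominated_convergence (fun p => ‖Φ p‖) (fun n => ?_) hinteg.norm
      (fun n => .of_forall fun p => ?_) (.of_forall fun p => ?_)
    · have hc : Continuous fun p : Fin 3 → ℝ => Real.exp (-(1 / (n : ℝ) ^ 2) * ∑ j, p j ^ 2) := by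
        fun_prop
      exact hc.aestronglyMeasurable.smul hinteg.aestronglyMeasurable
    · rw [norm_smul, Real.norm_of_nonneg (Real.exp_pos _).le]
      refine mul_le_of_le_one_left (norm_nonneg _) (Real.exp_le_one_iff.2 ?_)
      have : 0 ≤ 1 / (n : ℝ) ^ 2 * ∑ j, p j ^ 2 := by positivity
      linarith
    · have h1 : Filter.Tendsto (fun n : ℕ => 1 / (n : ℝ) ^ 2) Filter.atTop (nhds 0) := by
        simpa using (tendsto_one_div_atTop_nhds_zero_nat (𝕜 := ℝ)).pow 2
      have h2 := ((Real.continuous_exp.tendsto _).comp (h1.neg.mul_const (∑ j, p j ^ 2))).smul_const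
        (Φ p)
      simpa using h2
  set A := ∫ w : (Fin 4 → ℝ) × (Fin 4 → ℝ), ‖f w.1‖ * ‖g w.2‖ with hA
  have hbound : ∀ᶠ n : ℕ in Filter.atTop,
      ‖(∫ p, Real.exp (-(1 / (n : ℝ) ^ 2) * ∑ j, p j ^ 2) • Φ p).im‖ ≤
        A * √Real.pi ^ 3 * T * Real.exp 1 * ((n : ℝ) ^ 3 * Real.exp (-δ * n)) := by
    filter_upwards [Filter.eventually_gt_atTop 0] with n hn
    have hn' : (0 : ℝ) < n := Nat.cast_pos.2 hn
    refine (abs_im_regularized_le hm hf.continuous hfc hg.continuous hgc hδ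
      (fun x hx y hy => hδ' (x, y) ⟨hx, hy⟩) (fun x hx y hy => hT (x, y) ⟨hx, hy⟩)
      (ε := 1 / (n : ℝ) ^ 2) (lam := n) (by positivity) hn'.le).trans (le_of_eq ?_)
    have e1 : √(Real.pi / (1 / (n : ℝ) ^ 2)) = √Real.pi * n := by
      rw [div_div_eq_mul_div, div_one, Real.sqrt_mul Real.pi_pos.le, Real.sqrt_sq hn'.le]
    have e2 : 1 / (n : ℝ) ^ 2 * (n : ℝ) ^ 2 - n * δ = 1 + -δ * n := by
      field_simp; ring
    rw [e1, e2, Real.exp_add]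
    ring
  have hzero : Filter.Tendsto (fun n : ℕ => A * √Real.pi ^ 3 * T * Real.exp 1 *
      ((n : ℝ) ^ 3 * Real.exp (-δ * n))) Filter.atTop (nhds 0) := by
    have h := (tendsto_rpow_mul_exp_neg_mul_atTop_nhds_zero 3 δ hδ).comp
      (tendsto_natCast_atTop_atTop (R := ℝ))
    have h3 : ∀ x : ℝ, x ^ (3 : ℝ) = x ^ 3 := fun x => by exact_mod_cast Real.rpow_natCast x 3
    simp only [Function.comp_def, h3] at h
    simpa using h.const_mul (A * √Real.pi ^ 3 * T * Real.exp 1)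
  exact tendsto_nhds_unique hlim (squeeze_zero_norm' hbound hzero)
end
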